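/- arXiv:2002.02727 — 2 statements merged into one kernel-verified Lean document; each statement's English description precedes it below -/
import Mathlib

section
/- Let σ : A → B be a flat ring homomorphism of Noetherian commutative rings, where A is a complete local ring with maximal ideal m and the extended ideal mB is contained in the Jacobson radical of B. If the fiber B/mB is geometrically reduced over the field A/m and A is reduced, then B is reduced. -/
/-!
For `x : B`, completeness of `A` and Chevalley's theorem produce a least ideal `J` of `A` with
`x ∈ J B`, the content of `x`. Let `x` be nilpotent, let `p` be a prime of `A`, and let `V` be a
valuation ring dominating `A ⧸ p`. By flatness, `J V = w V` is the content of `1 ⊗ x` in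
`C := V ⊗ B`. If `w` were nonzero, we could write `1 ⊗ x = w y` with `y` nilpotent. The closed
fibre of `C` is a base change of the geometrically reduced closed fibre of `B` along a field
extension, so it is reduced, whence `y ∈ 𝔪_V C` and `1 ⊗ x ∈ w 𝔪_V C`. Minimality of `w V` then
gives `w V ⊆ w 𝔪_V`, contradicting Nakayama. Hence `J` lies in every prime `p` of `A`, and `J = 0`
if `A` is reduced.
-/

open TensorProduct IsLocalRing

universe u v

/-- An algebra `R` over a field `F` is geometrically reduced if `L ⊗[F] R` is reduced
for every finite field extension `L` of `F`. -/
def GeometricallyReduced (F : Type u) (R : Type v) [Field F] [CommRing R]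
    [Algebra F R] : Prop :=
  ∀ (L : Type u) [Field L] [Algebra F L] [FiniteDimensional F L], IsReduced (L ⊗[F] R)

section ReducedTensorProduct

lemma exists_algHom_ker_eq_of_isMaximal {k S : Type*} [Field k] [IsAlgClosed k] [CommRing S]
    [Algebra k S] [Algebra.FiniteType k S] (M : Ideal S) [M.IsMaximal] :
    ∃ φ : S →ₐ[k] k, RingHom.ker φ = M := by
  let : Field (S ⧸ M) := Ideal.Quotient.field M
  have : Module.Finite k (S ⧸ M) := finite_of_finite_type_of_isJacobsonRing k (S ⧸ M)
  let e : k ≃ₐ[k] S ⧸ M := AlgEquiv.ofBijective (Algebra.ofId k (S ⧸ M))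
    IsAlgClosed.algebraMap_bijective_of_isIntegral
  refine ⟨(e.symm : S ⧸ M →ₐ[k] k).comp (Ideal.Quotient.mkₐ k M), ?_⟩
  ext s
  simp [RingHom.mem_ker, Ideal.Quotient.eq_zero_iff_mem]

lemma eq_zero_of_forall_algHom_eq_zero {k S : Type*} [Field k] [IsAlgClosed k] [CommRing S]
    [Algebra k S] [Algebra.FiniteType k S] [IsReduced S] {s : S}
    (hs : ∀ φ : S →ₐ[k] k, φ s = 0) : s = 0 := by
  have : IsJacobsonRing S := isJacobsonRing_of_finiteType (A := k)
  rw [← Ideal.mem_bot, ← IsJacobsonRing.out ‹_› Ideal.isRadical_bot, Ideal.jacobson, Ideal.mem_sInf]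
  rintro M ⟨-, hM⟩
  obtain ⟨φ, rfl⟩ := exists_algHom_ker_eq_of_isMaximal (k := k) M
  exact hs φ

lemma basis_repr_lid_map {k S T ι : Type*} [CommRing k] [CommRing S] [Algebra k S] [CommRing T]
    [Algebra k T] (b : Module.Basis ι k T) (φ : S →ₐ[k] k) (z : S ⊗[k] T) (i : ι) :
    b.repr (Algebra.TensorProduct.lid k T (Algebra.TensorProduct.map φ (AlgHom.id k T) z)) i =
      φ ((b.baseChange S).repr z i) := by
  induction z using TensorProduct.induction_on with
  | zero => simp
  | tmul s t => simp [Module.Basis.baseChange_repr_tmul, mul_comm]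
  | add x y hx hy => simp [hx, hy]

lemma isReduced_tensorProduct_of_finiteType_of_isAlgClosed {k S T : Type*} [Field k]
    [IsAlgClosed k] [CommRing S] [Algebra k S] [Algebra.FiniteType k S] [IsReduced S]
    [CommRing T] [Algebra k T] [IsReduced T] : IsReduced (S ⊗[k] T) := by
  refine ⟨fun z hz => ?_⟩
  let b := Module.Basis.ofVectorSpace k T
  suffices coord_eq_zero : ∀ i, (b.baseChange S).repr z i = 0 from
    (b.baseChange S).repr.map_eq_zero_iff.1 (Finsupp.ext coord_eq_zero)
  refine fun i => eq_zero_of_forall_algHom_eq_zero (k := k) fun φ => ?_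
  have specialization_eq_zero :
      Algebra.TensorProduct.lid k T (Algebra.TensorProduct.map φ (AlgHom.id k T) z) = 0 :=
    ((hz.map _).map _).eq_zero
  rw [← basis_repr_lid_map, specialization_eq_zero, map_zero, Finsupp.zero_apply]

theorem isReduced_tensorProduct_of_isAlgClosed {k S T : Type*} [Field k] [IsAlgClosed k]
    [CommRing S] [Algebra k S] [IsReduced S] [CommRing T] [Algebra k T] [IsReduced T] :
    IsReduced (S ⊗[k] T) := by
  refine IsReduced.tensorProduct_of_flat_of_forall_fg fun T' hT' => ?_
  have : Algebra.FiniteType k T' := T'.fg_iff_finiteType.1 hT'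
  have : IsReduced T' := isReduced_of_injective T'.val Subtype.val_injective
  have := isReduced_tensorProduct_of_finiteType_of_isAlgClosed (k := k) (S := T') (T := S)
  exact isReduced_of_injective _ (Algebra.TensorProduct.comm k S T').injective

theorem isReduced_tensorProduct_of_isGeometricallyReduced {k R : Type*} [Field k] [CommRing R]
    [Algebra k R] [Algebra.IsGeometricallyReduced k R] (K : Type*) [Field K] [Algebra k K] :
    IsReduced (K ⊗[k] R) := by
  let f : AlgebraicClosure k →ₐ[k] AlgebraicClosure K := IsAlgClosed.lift
  let := f.toAlgebra
  have : IsScalarTower k (AlgebraicClosure k) (AlgebraicClosure K) :=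
    IsScalarTower.of_algebraMap_eq' f.comp_algebraMap.symm
  have : IsReduced (AlgebraicClosure K ⊗[AlgebraicClosure k] (AlgebraicClosure k ⊗[k] R)) :=
    isReduced_tensorProduct_of_isAlgClosed
  have : IsReduced (AlgebraicClosure K ⊗[k] R) :=
    isReduced_of_injective _ (Algebra.TensorProduct.cancelBaseChange k (AlgebraicClosure k)
      (AlgebraicClosure k) (AlgebraicClosure K) R).symm.injective
  exact isReduced_of_injective
    (Algebra.TensorProduct.map (IsScalarTower.toAlgHom k K (AlgebraicClosure K)) (AlgHom.id k R))
    (Module.Flat.rTensor_preserves_injective_linearMap _ (RingHom.injective _))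

theorem GeometricallyReduced.isGeometricallyReduced {F : Type u} {R : Type v} [Field F]
    [CommRing R] [Algebra F R] (h : GeometricallyReduced F R) :
    Algebra.IsGeometricallyReduced F R := by
  rw [Algebra.isGeometricallyReduced_field_iff]
  suffices IsReduced (R ⊗[F] AlgebraicClosure F) from
    isReduced_of_injective _ (Algebra.TensorProduct.comm F _ R).injective
  refine IsReduced.tensorProduct_of_flat_of_forall_fg fun L hL => ?_
  let := L.isField_of_algebraic.toField
  have : Algebra.FiniteType F L := L.fg_iff_finiteType.1 hL
  have : Algebra.IsIntegral F L := Algebra.IsIntegral.of_injective L.val Subtype.val_injective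
  have : FiniteDimensional F L := Algebra.IsIntegral.finite
  have := h L
  exact isReduced_of_injective _ (Algebra.TensorProduct.comm F R L).injective

end ReducedTensorProduct

section Chevalley

variable {A : Type*} [CommRing A]

lemma isMaximal_of_isPrime_of_isArtinianRing_quotient {I P : Ideal A} [IsArtinianRing (A ⧸ I)]
    [P.IsPrime] (hIP : I ≤ P) : P.IsMaximal := by
  have : (P.map (Ideal.Quotient.mk I)).IsPrime :=
    Ideal.map_isPrime_of_surjective Ideal.Quotient.mk_surjective (Ideal.mk_ker.trans_le hIP)
  have : (P.map (Ideal.Quotient.mk I)).IsMaximal := IsArtinianRing.isMaximal_of_isPrime _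
  rw [← Ideal.comap_map_mk hIP]
  exact Ideal.comap_isMaximal_of_surjective _ Ideal.Quotient.mk_surjective

lemma isArtinianRing_quotient_pow [IsNoetherianRing A] (I : Ideal A) [IsArtinianRing (A ⧸ I)]
    (n : ℕ) : IsArtinianRing (A ⧸ I ^ n) := by
  have : Ring.KrullDimLE 0 (A ⧸ I ^ n) := Ring.krullDimLE_zero_iff.2 fun P hP =>
    Ideal.isMaximal_of_isIntegral_of_isMaximal_comap (R := A) P <|
      isMaximal_of_isPrime_of_isArtinianRing_quotient <| (hP.comap _).le_of_pow_le <|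
        (Ideal.mk_ker (I := I ^ n)).ge.trans (Ideal.ker_le_comap _)
  exact IsNoetherianRing.isArtinianRing_of_krullDimLE_zero

lemma exists_mem_forall_le_sup_of_directedOn (I : Ideal A) [IsArtinianRing (A ⧸ I)]
    {S : Set (Ideal A)} (hne : S.Nonempty) (hdir : DirectedOn (· ≥ ·) S) :
    ∃ J ∈ S, ∀ J' ∈ S, J ≤ J' ⊔ I := by
  obtain ⟨_, ⟨J, hJ, rfl⟩, hmin⟩ :=
    IsArtinian.set_has_minimal (Ideal.map (Ideal.Quotient.mk I) '' S) (hne.image _)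
  refine ⟨J, hJ, fun J' hJ' => ?_⟩
  obtain ⟨K, hK, hKJ, hKJ'⟩ := hdir J hJ J' hJ'
  have map_eq : K.map (Ideal.Quotient.mk I) = J.map (Ideal.Quotient.mk I) :=
    (Ideal.map_mono hKJ).eq_of_not_lt (hmin _ ⟨K, hK, rfl⟩)
  have map_le : J.map (Ideal.Quotient.mk I) ≤ J'.map (Ideal.Quotient.mk I) :=
    map_eq ▸ Ideal.map_mono hKJ'
  rwa [Ideal.map_le_iff_le_comap, Ideal.comap_map_of_surjective _ Ideal.Quotient.mk_surjective,
    ← RingHom.ker_eq_comap_bot, Ideal.mk_ker] at map_le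

lemma iInf_sup_pow_eq_of_le_jacobson [IsNoetherianRing A] {I : Ideal A}
    (hI : I ≤ (⊥ : Ideal A).jacobson) (J : Ideal A) : ⨅ n : ℕ, J ⊔ I ^ n = J := by
  refine le_antisymm (fun x hx => ?_) (le_iInf fun n => le_sup_left)
  have : IsHausdorff I (A ⧸ J) := IsHausdorff.of_le_jacobson I (A ⧸ J) hI
  refine Ideal.Quotient.eq_zero_iff_mem.1 (IsHausdorff.haus this _ fun n => ?_)
  obtain ⟨a, ha, b, hb, rfl⟩ := Submodule.mem_sup.1 (Ideal.mem_iInf.1 hx n)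
  rw [SModEq.zero, map_add, Ideal.Quotient.eq_zero_iff_mem.2 ha, zero_add, ← mul_one b]
  exact Submodule.smul_mem_smul hb (Submodule.mem_top (x := (1 : A ⧸ J)))

lemma le_iInf_sup_pow_sup_pow_of_isPrecomplete (I : Ideal A) [IsPrecomplete I A]
    (N : ℕ → Ideal A) (k : ℕ) (hN : ∀ n, N n ≤ N (n + 1) ⊔ I ^ (k + n)) :
    N 0 ≤ (⨅ n, N n ⊔ I ^ n) ⊔ I ^ k := by
  intro a ha
  have exists_next (n : ℕ) (b : N n) : ∃ c : N (n + 1), (b : A) - c ∈ I ^ (k + n) := by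
    obtain ⟨c, hc, d, hd, hcd⟩ := Submodule.mem_sup.1 (hN n b.2)
    exact ⟨⟨c, hc⟩, by rwa [← hcd, add_sub_cancel_left]⟩
  choose next hnext using exists_next
  obtain ⟨s, s_zero, s_mem, s_sub_succ⟩ : ∃ s : ℕ → A,
      s 0 = a ∧ (∀ n, s n ∈ N n) ∧ ∀ n, s n - s (n + 1) ∈ I ^ (k + n) :=
    let t : (n : ℕ) → N n := Nat.rec ⟨a, ha⟩ next
    ⟨fun n => (t n).1, rfl, fun n => (t n).2, fun n => hnext n (t n)⟩
  have s_cauchy {m n : ℕ} (hmn : m ≤ n) : s m - s n ∈ I ^ (k + m) := by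
    induction n, hmn using Nat.le_induction with
    | base => simp
    | succ n hmn ih =>
      rw [← sub_add_sub_cancel _ (s n)]
      exact add_mem ih (Ideal.pow_le_pow_right (by lia) (s_sub_succ n))
  obtain ⟨L, hL⟩ := IsPrecomplete.prec (I := I) inferInstance (f := s) fun {m n} hmn => by
    rw [SModEq.sub_mem, smul_eq_mul, Ideal.mul_top]
    exact Ideal.pow_le_pow_right (m.le_add_left k) (s_cauchy hmn)
  have sub_limit_mem (n : ℕ) : s n - L ∈ I ^ n := by
    simpa only [SModEq.sub_mem, smul_eq_mul, Ideal.mul_top] using hL n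
  have limit_mem : L ∈ ⨅ n, N n ⊔ I ^ n := Ideal.mem_iInf.2 fun n => by
    rw [← sub_sub_cancel (s n) L]
    exact sub_mem (Ideal.mem_sup_left (s_mem n)) (Ideal.mem_sup_right (sub_limit_mem n))
  have a_sub_limit_mem : a - L ∈ I ^ k := by
    rw [← s_zero, ← sub_add_sub_cancel (s 0) (s k)]
    exact add_mem (s_cauchy k.zero_le) (sub_limit_mem k)
  rw [← add_sub_cancel L a]
  exact Submodule.add_mem_sup limit_mem a_sub_limit_mem

theorem exists_mem_le_sInf_sup_pow_of_directedOn [IsNoetherianRing A] (I : Ideal A)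
    [IsAdicComplete I A] [IsArtinianRing (A ⧸ I)] {S : Set (Ideal A)} (hne : S.Nonempty)
    (hdir : DirectedOn (· ≥ ·) S) (k : ℕ) : ∃ J ∈ S, J ≤ sInf S ⊔ I ^ k := by
  have exists_almost_least (n : ℕ) : ∃ J ∈ S, ∀ J' ∈ S, J ≤ J' ⊔ I ^ (k + n) :=
    have := isArtinianRing_quotient_pow I (k + n)
    exists_mem_forall_le_sup_of_directedOn _ hne hdir
  choose N hNS hN using exists_almost_least
  refine ⟨N 0, hNS 0, ?_⟩
  calc N 0 ≤ (⨅ n, N n ⊔ I ^ n) ⊔ I ^ k :=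
        le_iInf_sup_pow_sup_pow_of_isPrecomplete I N k fun n => hN n _ (hNS (n + 1))
    _ ≤ sInf S ⊔ I ^ k := by
        refine sup_le_sup_right (le_sInf fun J hJ => ?_) _
        rw [← iInf_sup_pow_eq_of_le_jacobson (IsAdicComplete.le_jacobson_bot I) J]
        exact iInf_mono fun n => sup_le
          ((hN n J hJ).trans (sup_le_sup_left (Ideal.pow_le_pow_right (n.le_add_left k)) J))
          le_sup_right

end Chevalley

section Flat

variable {A B : Type*} [CommRing A] [CommRing B] [Algebra A B] [Module.Flat A B]

lemma apply_one_tmul_eq_zero_iff {N : Type*} [AddCommGroup N] [Module A N] (f : A →ₗ[A] N)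
    (x : B) : f 1 ⊗ₜ[A] x = 0 ↔ x ∈ Ideal.map (algebraMap A B) (LinearMap.ker f) := by
  let f' : (A ⧸ LinearMap.ker f) →ₗ[A] N := (LinearMap.ker f).liftQ f le_rfl
  have hf' : Function.Injective f' :=
    LinearMap.ker_eq_bot.1 (Submodule.ker_liftQ_eq_bot _ _ _ le_rfl)
  calc f 1 ⊗ₜ[A] x = 0
      ↔ f'.rTensor B ((1 : A ⧸ LinearMap.ker f) ⊗ₜ[A] x) = 0 := Iff.rfl
    _ ↔ (1 : A ⧸ LinearMap.ker f) ⊗ₜ[A] x = 0 :=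
        map_eq_zero_iff _ (Module.Flat.rTensor_preserves_injective_linearMap f' hf')
    _ ↔ x ∈ Ideal.map (algebraMap A B) (LinearMap.ker f) := by
        rw [← (TensorProduct.quotTensorEquivQuotSMul B _).map_eq_zero_iff,
          TensorProduct.quotTensorEquivQuotSMul_mk_one_tmul, Submodule.Quotient.mk_eq_zero,
          Ideal.smul_top_eq_map, Submodule.restrictScalars_mem]

lemma map_inf_of_flat (I J : Ideal A) :
    (I ⊓ J).map (algebraMap A B) = I.map (algebraMap A B) ⊓ J.map (algebraMap A B) := by
  refine le_antisymm (Ideal.map_inf_le _) fun x ⟨hI, hJ⟩ => ?_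
  have mem_iff (K : Ideal A) := apply_one_tmul_eq_zero_iff (B := B) K.mkQ x
  simp only [Submodule.ker_mkQ] at mem_iff
  rw [SetLike.mem_coe, ← mem_iff] at hI hJ
  rw [← Submodule.ker_mkQ I, ← Submodule.ker_mkQ J, ← LinearMap.ker_prod,
    ← apply_one_tmul_eq_zero_iff]
  exact (TensorProduct.prodLeft A A (A ⧸ I) (A ⧸ J) B).injective (Prod.ext hI hJ)

lemma mem_map_comap_of_one_tmul_mem_map {V : Type*} [CommRing V] [Algebra A V] {𝔞 : Ideal V}
    {x : B} (hx : (1 : V) ⊗ₜ[A] x ∈ 𝔞.map (algebraMap V (V ⊗[A] B))) :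
    x ∈ (𝔞.comap (algebraMap A V)).map (algebraMap A B) := by
  let q := Algebra.TensorProduct.map (Ideal.Quotient.mkₐ A 𝔞) (AlgHom.id A B)
  have map_le_ker : 𝔞.map (algebraMap V (V ⊗[A] B)) ≤ RingHom.ker q := by
    refine Ideal.map_le_iff_le_comap.2 fun v hv => ?_
    simp [q, RingHom.mem_ker, Algebra.TensorProduct.algebraMap_apply,
      Ideal.Quotient.eq_zero_iff_mem.2 hv]
  have ker_eq : LinearMap.ker (Algebra.linearMap A (V ⧸ 𝔞)) = 𝔞.comap (algebraMap A V) := by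
    ext a
    exact Ideal.Quotient.eq_zero_iff_mem
  rw [← ker_eq, ← apply_one_tmul_eq_zero_iff]
  simpa [q] using map_le_ker hx

end Flat

section Content

/-- `J` is the content ideal of `x : B` if it is the least ideal of `A` whose extension to `B`
contains `x`. For `B = A[X]` this is the ideal generated by the coefficients of `x`. Content
ideals need not exist in general, so this is a predicate and not a function of `x`. -/
def IsContentIdeal {A B : Type*} [CommRing A] [CommRing B] [Algebra A B] (x : B)
    (J : Ideal A) : Prop :=
  IsLeast {I : Ideal A | x ∈ I.map (algebraMap A B)} J

/-- An `A`-algebra `B` is Ohm–Rush if each of its elements has a content ideal. -/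
def IsOhmRush (A B : Type*) [CommRing A] [CommRing B] [Algebra A B] : Prop :=
  ∀ x : B, ∃ J : Ideal A, IsContentIdeal x J

variable {A B : Type*} [CommRing A] [CommRing B] [Algebra A B]

lemma IsContentIdeal.mem_map {x : B} {J : Ideal A} (hJ : IsContentIdeal x J) :
    x ∈ J.map (algebraMap A B) :=
  hJ.1

lemma IsContentIdeal.le {x : B} {I J : Ideal A} (hJ : IsContentIdeal x J)
    (hx : x ∈ I.map (algebraMap A B)) : J ≤ I :=
  hJ.2 hx

lemma IsContentIdeal.fg {x : B} {J : Ideal A} (hJ : IsContentIdeal x J) : J.FG := by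
  classical
  obtain ⟨T, hT, hxT⟩ := Submodule.mem_span_finite_of_mem_span hJ.mem_map
  obtain ⟨G, hG, rfl⟩ := Finset.subset_set_image_iff.1 hT
  have hle : J ≤ Ideal.span G := hJ.le <| by
    rwa [Ideal.map_span, ← Finset.coe_image]
  exact ⟨G, le_antisymm (Ideal.span_le.2 hG) hle⟩

lemma IsContentIdeal.baseChange [Module.Flat A B] {x : B} {J : Ideal A} (hJ : IsContentIdeal x J)
    (V : Type*) [CommRing V] [Algebra A V] :
    IsContentIdeal ((1 : V) ⊗ₜ[A] x) (J.map (algebraMap A V)) := by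
  refine ⟨?_, fun 𝔞 h𝔞 =>
    Ideal.map_le_iff_le_comap.2 (hJ.le (mem_map_comap_of_one_tmul_mem_map h𝔞))⟩
  have one_tmul_mem := Ideal.mem_map_of_mem
    (Algebra.TensorProduct.includeRight : B →ₐ[A] V ⊗[A] B).toRingHom hJ.mem_map
  rw [Ideal.map_map] at one_tmul_mem
  change _ ∈ Ideal.map _ _
  rw [Ideal.map_map, ← IsScalarTower.algebraMap_eq]
  simpa using one_tmul_mem

theorem isOhmRush_of_flat_of_isAdicComplete [IsNoetherianRing A] [IsNoetherianRing B]
    [Module.Flat A B] (I : Ideal A) [IsAdicComplete I A] [IsArtinianRing (A ⧸ I)]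
    (hrad : I.map (algebraMap A B) ≤ (⊥ : Ideal B).jacobson) : IsOhmRush A B := by
  intro x
  let S : Set (Ideal A) := {J | x ∈ J.map (algebraMap A B)}
  refine ⟨sInf S, ?_, fun J hJ => sInf_le hJ⟩
  have hne : S.Nonempty := ⟨⊤, by simp [S, Ideal.map_top]⟩
  have hdir : DirectedOn (· ≥ ·) S := fun J hJ J' hJ' =>
    ⟨J ⊓ J', (map_inf_of_flat J J').ge ⟨hJ, hJ'⟩, inf_le_left, inf_le_right⟩
  change x ∈ (sInf S).map (algebraMap A B)
  rw [← iInf_sup_pow_eq_of_le_jacobson hrad ((sInf S).map (algebraMap A B)), Ideal.mem_iInf]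
  intro n
  obtain ⟨J, hJ, hle⟩ := exists_mem_le_sInf_sup_pow_of_directedOn I hne hdir n
  rw [← Ideal.map_pow, ← Ideal.map_sup]
  exact Ideal.map_mono hle hJ

end Content

section ValuationRing

variable {V C : Type*} [CommRing V] [IsDomain V] [IsLocalRing V] [CommRing C] [Algebra V C]
  [Module.Flat V C]

lemma IsContentIdeal.eq_zero_of_isNilpotent [IsReduced (ResidueField V ⊗[V] C)] {c : C}
    (hc : IsNilpotent c) {w : V} (hw : IsContentIdeal c (Ideal.span {w})) : w = 0 := by
  by_contra hw0
  obtain ⟨y, rfl⟩ : ∃ y, c = algebraMap V C w * y := by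
    rw [← dvd_def, ← Ideal.mem_span_singleton, ← Set.image_singleton, ← Ideal.map_span]
    exact hw.mem_map
  have hy : IsNilpotent y := by
    obtain ⟨n, hn⟩ := hc
    rw [mul_pow, ← map_pow, ← Algebra.smul_def] at hn
    exact ⟨n, (smul_eq_zero.1 hn).resolve_left (pow_ne_zero n hw0)⟩
  have y_mem : y ∈ (maximalIdeal V).map (algebraMap V C) := by
    have ker_eq : LinearMap.ker (Algebra.linearMap V (ResidueField V)) = maximalIdeal V :=
      IsLocalRing.ker_residue
    rw [← ker_eq, ← apply_one_tmul_eq_zero_iff]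
    simpa using
      (hy.map (Algebra.TensorProduct.includeRight : C →ₐ[V] ResidueField V ⊗[V] C)).eq_zero
  have span_le : Ideal.span {w} ≤ maximalIdeal V • Ideal.span {w} := hw.le <| by
    rw [smul_eq_mul, mul_comm (maximalIdeal V), Ideal.map_mul]
    exact Ideal.mul_mem_mul
      (Ideal.mem_map_of_mem _ (Ideal.mem_span_singleton_self w)) y_mem
  exact hw0 <| Ideal.span_singleton_eq_bot.1 <|
    Submodule.eq_bot_of_le_smul_of_le_jacobson_bot _ _ (Submodule.fg_span_singleton w) span_le
      (maximalIdeal_le_jacobson _)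

lemma exists_valuationSubring_isLocalHom_ker_eq {A : Type*} [CommRing A] [IsLocalRing A]
    (p : Ideal A) [p.IsPrime] :
    ∃ (V : ValuationSubring (FractionRing (A ⧸ p))) (f : A →+* V),
      IsLocalHom f ∧ RingHom.ker f = p := by
  obtain ⟨V, hV, hlocal⟩ :=
    IsLocalRing.exists_factor_valuationRing (algebraMap A (FractionRing (A ⧸ p)))
  refine ⟨V, (algebraMap A (FractionRing (A ⧸ p))).codRestrict V.toSubring hV, hlocal, ?_⟩
  ext a
  rw [RingHom.mem_ker, ← Subtype.val_inj]
  change algebraMap A (FractionRing (A ⧸ p)) a = 0 ↔ a ∈ p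
  rw [IsScalarTower.algebraMap_apply A (A ⧸ p), IsFractionRing.to_map_eq_zero_iff]
  exact Ideal.Quotient.eq_zero_iff_mem

end ValuationRing

section NilpotentContent

variable {A B : Type*} [CommRing A] [IsLocalRing A] [CommRing B] [Algebra A B] [Module.Flat A B]
  [Algebra.IsGeometricallyReduced (ResidueField A) (ResidueField A ⊗[A] B)]

lemma IsContentIdeal.le_ker_algebraMap_of_isNilpotent {x : B} {J : Ideal A}
    (hJ : IsContentIdeal x J) (hx : IsNilpotent x) (V : Type*) [CommRing V] [IsDomain V]
    [ValuationRing V] [Algebra A V] [IsLocalHom (algebraMap A V)] :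
    J ≤ RingHom.ker (algebraMap A V) := by
  have : IsReduced (ResidueField V ⊗[V] (V ⊗[A] B)) := by
    have : IsReduced (ResidueField V ⊗[ResidueField A] (ResidueField A ⊗[A] B)) :=
      isReduced_tensorProduct_of_isGeometricallyReduced _
    let e := (Algebra.TensorProduct.cancelBaseChange A (ResidueField A) (ResidueField A)
      (ResidueField V) B).symm.toRingEquiv
    let e' := (Algebra.TensorProduct.cancelBaseChange A V V (ResidueField V) B).toRingEquiv
    exact isReduced_of_injective (e'.trans e) (e'.trans e).injective
  obtain ⟨w, hw⟩ : ∃ w, J.map (algebraMap A V) = Ideal.span {w} :=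
    (IsBezout.isPrincipal_of_FG _ (hJ.fg.map (algebraMap A V))).principal
  have hcontent : IsContentIdeal ((1 : V) ⊗ₜ[A] x) (Ideal.span {w}) := hw ▸ hJ.baseChange V
  have w_eq_zero : w = 0 := hcontent.eq_zero_of_isNilpotent
    (hx.map (Algebra.TensorProduct.includeRight : B →ₐ[A] V ⊗[A] B))
  rw [← Ideal.map_eq_bot_iff_le_ker, hw, w_eq_zero, Ideal.span_singleton_zero]

lemma IsContentIdeal.le_nilradical {x : B} {J : Ideal A}
    (hJ : IsContentIdeal x J) (hx : IsNilpotent x) : J ≤ nilradical A := by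
  rw [nilradical_eq_sInf]
  refine le_sInf fun p (hp : p.IsPrime) => ?_
  obtain ⟨V, f, hlocal, hker⟩ := exists_valuationSubring_isLocalHom_ker_eq p
  let := f.toAlgebra
  have : IsLocalHom (algebraMap A V) := hlocal
  exact hker ▸ hJ.le_ker_algebraMap_of_isNilpotent hx V

end NilpotentContent

theorem isReduced_of_flat_of_geometricallyReduced_fiber_general
    (A B : Type*) [CommRing A] [CommRing B] [IsLocalRing A] [Algebra A B] [Module.Flat A B]
    (hcontent : IsOhmRush A B)
    (hfib : GeometricallyReduced (ResidueField A) (ResidueField A ⊗[A] B))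
    (hA : IsReduced A) : IsReduced B := by
  have := hfib.isGeometricallyReduced
  refine ⟨fun x hx => ?_⟩
  obtain ⟨J, hJ⟩ := hcontent x
  have J_eq_bot : J = ⊥ := by
    simpa only [nilradical_eq_bot_iff.2 hA, le_bot_iff] using hJ.le_nilradical hx
  simpa only [J_eq_bot, Ideal.map_bot, Ideal.mem_bot] using hJ.mem_map

/-- **Statement 10.** Let `σ : A → B` be a flat ring homomorphism of Noetherian
commutative rings, where `A` is a complete local ring with maximal ideal `m` and `mB` is
contained in the Jacobson radical of `B`. If the fiber `B ⧸ mB = κ(m) ⊗[A] B` is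
geometrically reduced over the field `A ⧸ m` and `A` is reduced, then `B` is reduced. -/
theorem isReduced_of_flat_of_geometricallyReduced_fiber
    (A B : Type*) [CommRing A] [CommRing B] [IsNoetherianRing A] [IsNoetherianRing B]
    [IsLocalRing A] [IsAdicComplete (maximalIdeal A) A]
    [Algebra A B] [Module.Flat A B]
    (hrad : Ideal.map (algebraMap A B) (maximalIdeal A) ≤ (⊥ : Ideal B).jacobson)
    (hfib : GeometricallyReduced (ResidueField A) (ResidueField A ⊗[A] B))
    (hA : IsReduced A) : IsReduced B := by
  have : IsArtinianRing (A ⧸ maximalIdeal A) := inferInstanceAs (IsArtinianRing (ResidueField A))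
  exact isReduced_of_flat_of_geometricallyReduced_fiber_general A B
    (isOhmRush_of_flat_of_isAdicComplete (maximalIdeal A) hrad) hfib hA
end

section
/- Let A and B be two Noetherian local commutative rings containing a field k, with maximal ideals m and n respectively. Then the completed tensor product A⊗̂_k B is a Noetherian ring if and only if the tensor product of residue fields (A/m)⊗_k(B/n) is a Noetherian ring. -/
open TensorProduct

/-- The ideal `r = m ⊗ B + A ⊗ n` of `C = A ⊗[k] B`, where `m` and `n` are the Jacobson
radicals of `A` and `B` (for a local ring, the Jacobson radical is the maximal ideal). -/
noncomputable def tensorRadical (k A B : Type*) [Field k] [CommRing A] [CommRing B]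
    [Algebra k A] [Algebra k B] : Ideal (A ⊗[k] B) :=
  Ideal.map (Algebra.TensorProduct.includeLeft (R := k) (S := k) (A := A) (B := B))
      ((⊥ : Ideal A).jacobson) ⊔
    Ideal.map (Algebra.TensorProduct.includeRight (R := k) (A := A) (B := B))
      ((⊥ : Ideal B).jacobson)

/-- The completed tensor product `A ⊗̂[k] B`: the `r`-adic separated completion of
`C = A ⊗[k] B`, i.e. the inverse limit of the rings `C ⧸ r ^ i`. -/
noncomputable abbrev CompletedTensor (k A B : Type*) [Field k] [CommRing A] [CommRing B]
    [Algebra k A] [Algebra k B] : Type _ :=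
  AdicCompletion (tensorRadical k A B) (A ⊗[k] B)

/-!
Since `(A ⊗ B) ⧸ r ≃ (A ⧸ m) ⊗ (B ⧸ n)`, the theorem says that the completion of a ring along a
finitely generated ideal is Noetherian exactly when its quotient by that ideal is, so it suffices
that a ring `R`, complete with respect to a finitely generated ideal `I` with `R ⧸ I` Noetherian,
is Noetherian. Otherwise there is an ideal `p` maximal among those that are not finitely
generated; it is prime and, `R ⧸ I` being Noetherian, misses some `x ∈ I`. By maximality `p + (x)`
is finitely generated, say `p + (x) = q + (x)` with `q ≤ p` finitely generated. As `p` is prime and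
`x ∉ p`, this gives `p = q + x p ≤ q + I p`, and completeness yields `p = q`, a contradiction.
-/

section AdicModules

variable {R M : Type*} [CommRing R] [AddCommGroup M] [Module R M] (I : Ideal R)

theorem isPrecomplete_of_finite [IsPrecomplete I R] [Module.Finite R M] : IsPrecomplete I M := by
  rw [← AdicCompletion.of_surjective_iff, ← LinearMap.range_eq_top, eq_top_iff]
  rintro x -
  obtain ⟨t, rfl⟩ := AdicCompletion.ofTensorProduct_surjective_of_finite I M x
  induction t with
  | zero => simp
  | add s t hs ht => simpa only [map_add] using add_mem hs ht
  | tmul r m =>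
    obtain ⟨r, rfl⟩ := AdicCompletion.of_surjective I R r
    refine ⟨r • m, ?_⟩
    rw [AdicCompletion.ofTensorProduct_tmul, map_smul]
    exact (algebraMap_smul (AdicCompletion I R) r (AdicCompletion.of I M m)).symm

theorem isHausdorff_submodule [IsHausdorff I M] (N : Submodule R M) : IsHausdorff I N where
  haus' x hx := by
    refine Subtype.ext (IsHausdorff.haus ‹_› (x : M) fun n ↦ ?_)
    have hxn := hx n
    rw [SModEq.zero, Submodule.mem_smul_top_iff] at hxn
    exact SModEq.zero.mpr (Submodule.smul_mono le_rfl le_top hxn)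

variable {I}

theorem eq_of_le_sup_smul_of_isPrecomplete [IsPrecomplete I R] [IsHausdorff I M]
    {N N' : Submodule R M} (hfg : N'.FG) (hle : N' ≤ N) (hN : N ≤ N' ⊔ I • N) : N' = N := by
  have : Module.Finite R N' := Module.Finite.of_fg hfg
  have : IsPrecomplete I N' := isPrecomplete_of_finite I
  have : IsHausdorff I N := isHausdorff_submodule I N
  have hsurj : Function.Surjective (Submodule.inclusion hle) := by
    refine surjective_of_mkQ_comp_surjective (I := I) fun y ↦ ?_
    obtain ⟨⟨y, hy⟩, rfl⟩ := Submodule.mkQ_surjective _ y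
    obtain ⟨a, ha, b, hb, rfl⟩ := Submodule.mem_sup.mp (hN hy)
    refine ⟨⟨a, ha⟩, (Submodule.Quotient.eq' _).mpr ?_⟩
    simpa [Submodule.mem_smul_top_iff] using hb
  refine hle.antisymm fun y hy ↦ ?_
  obtain ⟨a, ha⟩ := hsurj ⟨y, hy⟩
  obtain rfl : (a : M) = y := congrArg Subtype.val ha
  exact a.2

end AdicModules

section FinitelyGenerated

variable {R M : Type*} [Semiring R] [AddCommMonoid M] [Module R M]

theorem exists_fg_le_sup_eq_of_fg_sup {N P : Submodule R M} (h : (N ⊔ P).FG) :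
    ∃ N' ≤ N, N'.FG ∧ N' ⊔ P = N ⊔ P := by
  have hspan_union : Submodule.span R (N ∪ P : Set M) = N ⊔ P := by
    rw [Submodule.span_union, Submodule.span_eq, Submodule.span_eq]
  rw [← hspan_union, Submodule.fg_span_iff_fg_span_finset_subset] at h
  obtain ⟨s, hs, hspan⟩ := h
  have hle : Submodule.span R (s ∩ N : Set M) ≤ N := Submodule.span_le.mpr Set.inter_subset_right
  refine ⟨_, hle, Submodule.fg_span (s.finite_toSet.inter_of_left _),
    (sup_le_sup_right hle P).antisymm ?_⟩
  rw [← hspan_union, hspan, Submodule.span_le]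
  intro x hx
  rcases hs hx with hxN | hxP
  · exact Submodule.mem_sup_left (Submodule.subset_span ⟨hx, hxN⟩)
  · exact Submodule.mem_sup_right hxP

theorem exists_maximal_not_fg (h : ¬ IsNoetherian R M) :
    ∃ N : Submodule R M, Maximal (¬ ·.FG) N := by
  obtain ⟨N₀, hN₀⟩ : ∃ N : Submodule R M, ¬ N.FG := by simpa [isNoetherian_def] using h
  suffices hchain : ∀ C ⊆ {N : Submodule R M | ¬ N.FG}, IsChain (· ≤ ·) C → C.Nonempty →
      ¬ (sSup C).FG by
    obtain ⟨N, -, hN⟩ := zorn_le_nonempty₀ {N : Submodule R M | ¬ N.FG}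
      (fun C hC hCchain N hNC ↦ ⟨sSup C, hchain C hC hCchain ⟨N, hNC⟩, fun _ ↦ le_sSup⟩) N₀ hN₀
    exact ⟨N, hN⟩
  intro C hC hCchain hCne hfg
  obtain ⟨N, hNC, hle⟩ := (CompleteLattice.isCompactElement_iff_le_of_directed_sSup_le _ _).mp
    ((Submodule.fg_iff_compact _).mp hfg) C hCne hCchain.directedOn le_rfl
  exact hC hNC (hle.antisymm (le_sSup hNC) ▸ hfg)

end FinitelyGenerated

section AdicRings

variable {R : Type*} [CommRing R] {I : Ideal R}

theorem fg_of_isPrime_of_fg_sup_span_singleton [IsAdicComplete I R] {p : Ideal R} [p.IsPrime]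
    {x : R} (hxI : x ∈ I) (hxp : x ∉ p) (hfg : (p ⊔ Ideal.span {x}).FG) : p.FG := by
  obtain ⟨q, hqp, hq, hsup⟩ := exists_fg_le_sup_eq_of_fg_sup hfg
  suffices p ≤ q ⊔ I • p from eq_of_le_sup_smul_of_isPrecomplete hq hqp this ▸ hq
  intro y hy
  obtain ⟨a, ha, z, hz, rfl⟩ := Submodule.mem_sup.mp (hsup.ge (Submodule.mem_sup_left hy))
  obtain ⟨r, rfl⟩ := Ideal.mem_span_singleton'.mp hz
  have hrx : r * x ∈ p := (p.add_mem_iff_right (hqp ha)).mp hy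
  have hr : r ∈ p := (Ideal.IsPrime.mem_or_mem ‹_› hrx).resolve_right hxp
  exact Submodule.add_mem_sup ha (mul_comm x r ▸ Submodule.smul_mem_smul hxI hr)

theorem fg_of_le_of_isNoetherianRing_quotient [IsNoetherianRing (R ⧸ I)] (hI : I.FG)
    {a : Ideal R} (hIa : I ≤ a) : a.FG := by
  refine Ideal.fg_of_fg_map_of_fg_inf_ker_of_surjective (f := Ideal.Quotient.mk I)
    (IsNoetherian.noetherian _) ?_ Ideal.Quotient.mk_surjective
  rwa [Ideal.mk_ker, inf_eq_right.mpr hIa]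

theorem isNoetherianRing_of_isAdicComplete [IsAdicComplete I R] [IsNoetherianRing (R ⧸ I)]
    (hI : I.FG) : IsNoetherianRing R := by
  by_contra h
  obtain ⟨p, hp⟩ := exists_maximal_not_fg h
  have : Ideal.IsPrime p := Ideal.isOka_fg.isPrime_of_maximal_not hp
  have hIp : ¬ I ≤ p := fun hIp ↦ hp.prop (fg_of_le_of_isNoetherianRing_quotient hI hIp)
  obtain ⟨x, hxI, hxp⟩ := SetLike.not_le_iff_exists.mp hIp
  have hfg : (p ⊔ Ideal.span {x}).FG :=
    of_not_not (hp.not_prop_of_gt (Submodule.lt_sup_iff_notMem.mpr hxp))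
  exact hp.prop (fg_of_isPrime_of_fg_sup_span_singleton hxI hxp hfg)

theorem isNoetherianRing_adicCompletion_iff (hI : I.FG) :
    IsNoetherianRing (AdicCompletion I R) ↔ IsNoetherianRing (R ⧸ I) := by
  have hsurj : Function.Surjective (AdicCompletion.evalOneₐ I).toRingHom :=
    AdicCompletion.evalOneₐ_surjective I
  refine ⟨fun _ ↦ isNoetherianRing_of_surjective _ _ _ hsurj, fun _ ↦ ?_⟩
  let J := I.map (algebraMap R (AdicCompletion I R))
  have : IsAdicComplete J (AdicCompletion I R) :=
    (IsAdicComplete.map_algebraMap_iff I _).mpr (AdicCompletion.isAdicComplete hI)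
  have : IsNoetherianRing (AdicCompletion I R ⧸ J) :=
    isNoetherianRing_of_ringEquiv (R ⧸ I) <| (RingHom.quotientKerEquivOfSurjective hsurj).symm.trans
      (Ideal.quotEquivOfEq (AdicCompletion.ker_evalOneₐ_eq_map I hI))
  exact isNoetherianRing_of_isAdicComplete (I := J) (hI.map _)

end AdicRings

section TensorProduct

variable (k : Type*) {A B : Type*} [CommRing k] [CommRing A] [CommRing B] [Algebra k A]
  [Algebra k B]

theorem ker_tensorProduct_map_mkₐ (I : Ideal A) (J : Ideal B) :
    RingHom.ker (Algebra.TensorProduct.map (Ideal.Quotient.mkₐ k I) (Ideal.Quotient.mkₐ k J)) =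
      I.map (Algebra.TensorProduct.includeLeft : A →ₐ[k] A ⊗[k] B) ⊔
        J.map (Algebra.TensorProduct.includeRight : B →ₐ[k] A ⊗[k] B) := by
  have hI : RingHom.ker (Ideal.Quotient.mkₐ k I) = I := Ideal.Quotient.mkₐ_ker k I
  have hJ : RingHom.ker (Ideal.Quotient.mkₐ k J) = J := Ideal.Quotient.mkₐ_ker k J
  rw [Algebra.TensorProduct.map_ker _ _ (Ideal.Quotient.mkₐ_surjective k I)
    (Ideal.Quotient.mkₐ_surjective k J), hI, hJ]

/-- The isomorphism `(A ⊗ B) ⧸ (I ⊗ B + A ⊗ J) ≃ (A ⧸ I) ⊗ (B ⧸ J)` describing a tensor product of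
quotient algebras; `I ⊗ B` and `A ⊗ J` are encoded as the extensions of `I` and `J` to `A ⊗ B`. -/
noncomputable def tensorQuotientSupEquiv (I : Ideal A) (J : Ideal B) :
    ((A ⊗[k] B) ⧸ (I.map (Algebra.TensorProduct.includeLeft : A →ₐ[k] A ⊗[k] B) ⊔
      J.map (Algebra.TensorProduct.includeRight : B →ₐ[k] A ⊗[k] B))) ≃ₐ[k]
      (A ⧸ I) ⊗[k] (B ⧸ J) :=
  (Ideal.quotientEquivAlgOfEq k (ker_tensorProduct_map_mkₐ k I J).symm).trans <|
    Ideal.quotientKerAlgEquivOfSurjective <|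
      TensorProduct.map_surjective (Ideal.Quotient.mkₐ_surjective k I)
        (Ideal.Quotient.mkₐ_surjective k J)

end TensorProduct

theorem tensorRadical_fg (k : Type*) {A B : Type*} [Field k] [CommRing A] [CommRing B]
    [Algebra k A] [Algebra k B] (hA : (⊥ : Ideal A).jacobson.FG)
    (hB : (⊥ : Ideal B).jacobson.FG) : (tensorRadical k A B).FG :=
  Submodule.FG.sup (hA.map _) (hB.map _)

theorem isNoetherianRing_completedTensor_iff_general (k A B : Type*) [Field k]
    [CommRing A] [CommRing B] [Algebra k A] [Algebra k B]
    (hA : (⊥ : Ideal A).jacobson.FG) (hB : (⊥ : Ideal B).jacobson.FG) :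
    IsNoetherianRing (CompletedTensor k A B) ↔
      IsNoetherianRing ((A ⧸ (⊥ : Ideal A).jacobson) ⊗[k] (B ⧸ (⊥ : Ideal B).jacobson)) := by
  let e : (A ⊗[k] B) ⧸ tensorRadical k A B ≃+*
      (A ⧸ (⊥ : Ideal A).jacobson) ⊗[k] (B ⧸ (⊥ : Ideal B).jacobson) :=
    (tensorQuotientSupEquiv k _ _).toRingEquiv
  rw [isNoetherianRing_adicCompletion_iff (tensorRadical_fg k hA hB)]
  exact ⟨fun _ ↦ isNoetherianRing_of_ringEquiv _ e, fun _ ↦ isNoetherianRing_of_ringEquiv _ e.symm⟩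

/-- **Statement 18.** Let `A` and `B` be two Noetherian local commutative rings containing
a field `k`, with maximal ideals `m` and `n`. Then `A ⊗̂[k] B` is Noetherian if and only
if `(A ⧸ m) ⊗[k] (B ⧸ n)` is Noetherian. -/
theorem isNoetherianRing_completedTensor_iff (k A B : Type*) [Field k]
    [CommRing A] [CommRing B] [IsNoetherianRing A] [IsNoetherianRing B]
    [IsLocalRing A] [IsLocalRing B] [Algebra k A] [Algebra k B] :
    IsNoetherianRing (CompletedTensor k A B) ↔
      IsNoetherianRing
        ((A ⧸ IsLocalRing.maximalIdeal A) ⊗[k] (B ⧸ IsLocalRing.maximalIdeal B)) := by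
  rw [← IsLocalRing.jacobson_eq_maximalIdeal (⊥ : Ideal A) bot_ne_top,
    ← IsLocalRing.jacobson_eq_maximalIdeal (⊥ : Ideal B) bot_ne_top]
  exact isNoetherianRing_completedTensor_iff_general k A B (IsNoetherian.noetherian _)
    (IsNoetherian.noetherian _)
end
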